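/- Let (e_1, ..., e_n) be a fan of a matroid M. Then the set {e_1, ..., e_n} is 3-separating in M, that is, λ_M({e_1, ..., e_n}) <= 2. -/

import Mathlib

/-!
Build the set `X = {e 1, ..., e m}` one element at a time. Once `m ≥ 2`, the next element `f` lies
in a circuit or a cocircuit whose other elements are in `X`, and then `λ (X ∪ {f}) ≤ λ X`:

* in the circuit case `f` is spanned by `X`, so the first rank in `λ` does not change and the
  second does not increase;
* in the cocircuit case `f` is not spanned by `E - (X ∪ {f})`, because a circuit and a cocircuit
  cannot meet in exactly one element; so the second rank drops by one, while the first grows by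
  at most one.

The induction starts from `λ X ≤ |X|`.
-/

open Matroid Set

universe u

variable {α : Type u}

namespace PaperDefs

/-- Deletion of a set of elements from a matroid. -/
def mdel (M : Matroid α) (D : Set α) : Matroid α := M ↾ (M.E \ D)

/-- Contraction of a set of elements in a matroid. -/
def mcon (M : Matroid α) (C : Set α) : Matroid α := (mdel M✶ C)✶

/-- A circuit: a minimal dependent set. -/
def IsCircuit (M : Matroid α) (C : Set α) : Prop :=
  M.Dep C ∧ ∀ X, X ⊂ C → M.Indep X

/-- A triangle: a 3-element circuit. -/
def IsTriangle (M : Matroid α) (T : Set α) : Prop :=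
  IsCircuit M T ∧ T.encard = 3

/-- A triad: a 3-element cocircuit. -/
def IsTriad (M : Matroid α) (T : Set α) : Prop := IsTriangle M✶ T

/-- The (extended natural number) rank of a set in a matroid: the supremum of the
cardinalities of its independent subsets. -/
noncomputable def erk (M : Matroid α) (X : Set α) : ℕ∞ :=
  ⨆ I ∈ {I : Set α | M.Indep I ∧ I ⊆ X}, I.encard

/-- Two elements are connected if they are equal or lie in a common circuit. -/
def ConnTo (M : Matroid α) (e f : α) : Prop :=
  (e = f ∧ e ∈ M.E) ∨ ∃ C, IsCircuit M C ∧ e ∈ C ∧ f ∈ C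

/-- A matroid is connected if its ground set is nonempty and every two of its elements
are connected. -/
def Conn (M : Matroid α) : Prop :=
  M.E.Nonempty ∧ ∀ e ∈ M.E, ∀ f ∈ M.E, ConnTo M e f

/-- A 2-separation of a matroid: a partition `(X, Y)` of the ground set with both sides
of size at least two and `r(X) + r(Y) - r(M) ≤ 1`. -/
def TwoSep (M : Matroid α) (X Y : Set α) : Prop :=
  X ∪ Y = M.E ∧ Disjoint X Y ∧ 2 ≤ X.encard ∧ 2 ≤ Y.encard ∧
    erk M X + erk M Y ≤ erk M M.E + 1

/-- A matroid is 3-connected if it is connected and has no 2-separation. -/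
def ThreeConn (M : Matroid α) : Prop :=
  Conn M ∧ ∀ X Y, ¬ TwoSep M X Y

/-- A matroid is 3-connected up to series and parallel sets if it is connected and, for
every 2-separation `(X, Y)`, `min {r X, r Y} = 1` or `min {r✶ X, r✶ Y} = 1`. -/
def ThreeConnUpToSP (M : Matroid α) : Prop :=
  Conn M ∧ ∀ X Y, TwoSep M X Y →
    min (erk M X) (erk M Y) = 1 ∨ min (erk M✶ X) (erk M✶ Y) = 1

/-- `N` is a minor of `M`: it is obtained from `M` by contracting a set `C` and deleting
a disjoint set `D`. -/
def IsMinor (N M : Matroid α) : Prop :=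
  ∃ C D, C ⊆ M.E ∧ D ⊆ M.E ∧ Disjoint C D ∧ N = mdel (mcon M C) D

/-- `M` is isomorphic to `N`: there is a bijection between the ground sets under which
independence corresponds. -/
def IsoTo (M N : Matroid α) : Prop :=
  ∃ f : α → α, Set.BijOn f M.E N.E ∧ ∀ I, I ⊆ M.E → (M.Indep I ↔ N.Indep (f '' I))

/-- The cyclic interval `{i, i+1, ..., j-1}` in `ZMod r`. -/
def cycArc (r : ℕ) (i j : ZMod r) : Set (ZMod r) :=
  {k | ∃ m : ℕ, m < (j - i).val ∧ k = i + (m : ZMod r)}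

/-- `M` is (isomorphic to) a rank-`r` wheel for some `r ≥ 2`, i.e. the cycle matroid of
the wheel graph with `r` spokes: there is a labelling of the ground set by spokes `s i`
and rim elements `w i` so that the circuits of `M` are precisely the rim together with
the sets consisting of two spokes and the rim elements of one of the two arcs joining
them. -/
def IsWheel (M : Matroid α) : Prop :=
  ∃ r : ℕ, 2 ≤ r ∧ ∃ s w : ZMod r → α,
    Function.Injective (Sum.elim s w) ∧
    M.E = Set.range s ∪ Set.range w ∧
    ∀ C, IsCircuit M C ↔
      (C = Set.range w ∨
        ∃ i j : ZMod r, i ≠ j ∧ C = {s i, s j} ∪ w '' cycArc r i j)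

/-- `M` is (isomorphic to) a rank-`r` whirl for some `r ≥ 2`: obtained from the rank-`r`
wheel by relaxing the rim circuit; its circuits are the two-spokes-plus-arc circuits of
the wheel together with the sets consisting of the whole rim and a single spoke. -/
def IsWhirl (M : Matroid α) : Prop :=
  ∃ r : ℕ, 2 ≤ r ∧ ∃ s w : ZMod r → α,
    Function.Injective (Sum.elim s w) ∧
    M.E = Set.range s ∪ Set.range w ∧
    ∀ C, IsCircuit M C ↔
      ((∃ i : ZMod r, C = insert (s i) (Set.range w)) ∨
        ∃ i j : ZMod r, i ≠ j ∧ C = {s i, s j} ∪ w '' cycArc r i j)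

/-- A triangle if `b = true`, a triad if `b = false`. -/
def TriOrTriad (M : Matroid α) (b : Bool) (T : Set α) : Prop :=
  cond b (IsTriangle M T) (IsTriad M T)

/-- The alternation pattern of a fan, recorded as a list: position `i` (zero-based)
carries a spoke element iff `fanBool b i = true`, where `b` records whether the first
triple of the fan is a triangle. -/
def fanBool (b : Bool) (i : ℕ) : Bool := if i % 2 = 0 then b else !b

/-- `F` is a fan of `M` whose first triple is a triangle if `b = true` (so that the
first element is a spoke element) and a triad if `b = false`: a list of at least three
distinct elements of the ground set in which every three consecutive elements form
alternately triangles and triads. -/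
def IsFanWith (M : Matroid α) (b : Bool) (F : List α) : Prop :=
  3 ≤ F.length ∧ F.Nodup ∧ (∀ x ∈ F, x ∈ M.E) ∧
  ∀ (l₁ : List α) (x y z : α) (l₂ : List α), F = l₁ ++ x :: y :: z :: l₂ →
    TriOrTriad M (fanBool b l₁.length) {x, y, z}

/-- `F` is a fan of `M`. -/
def IsFan (M : Matroid α) (F : List α) : Prop := ∃ b, IsFanWith M b F

/-- `F` is consistent with `F'`: `F` is a (not necessarily contiguous) subsequence of
`F'` or of its reversal. -/
def Consistent (F F' : List α) : Prop := F.Sublist F' ∨ F.Sublist F'.reverse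

/-- A finite family of lists is pairwise disjoint. -/
def PairwiseDisjointLists (𝓕 : Finset (List α)) : Prop :=
  ∀ F ∈ 𝓕, ∀ G ∈ 𝓕, F ≠ G → ∀ x ∈ F, x ∉ G

/-- `𝓕` is a covering family of `M'` relative to `N` and `FN`: a family of pairwise
disjoint fans of `M'`, of the same size as `FN`, such that every fan of `FN` is
consistent with a member of `𝓕` and every element of `E(M') - E(N)` lies in a member
of `𝓕`. -/
def CoveringFamily (N : Matroid α) (FN : Finset (List α)) (M' : Matroid α)
    (𝓕 : Finset (List α)) : Prop :=
  (∀ F ∈ 𝓕, IsFan M' F) ∧ PairwiseDisjointLists 𝓕 ∧ 𝓕.card = FN.card ∧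
  (∀ F ∈ FN, ∃ F' ∈ 𝓕, Consistent F F') ∧
  (∀ x ∈ M'.E \ N.E, ∃ F ∈ 𝓕, x ∈ F)

/-- `M` is obtained from `M'` by a fan-lengthening move on the fan `F₀` of `M'`,
producing the fan `F` of `M`: either `M' = M \ e₁` where `e₁` is a terminal spoke
element of `F`, or `M' = M / e₁` where `e₁` is a terminal rim element of `F`, or
(when `F` has at least five elements) `M' = M / eᵢ \ eᵢ₊₁` for a rim element `eᵢ`
of `F` with `1 ≤ i ≤ n - 1`; in each case `M` and `M'` are 3-connected and `F₀` is
the corresponding shortened fan. -/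
def FanLengthen (M' M : Matroid α) (F₀ F : List α) : Prop :=
  ThreeConn M ∧ 4 ≤ F.length ∧ IsFan M' F₀ ∧
  ∃ b, IsFanWith M b F ∧
    ((∃ e F', F = e :: F' ∧ b = true ∧ M' = mdel M {e} ∧ ThreeConn M' ∧ F₀ = F') ∨
     (∃ e F', F = e :: F' ∧ b = false ∧ M' = mcon M {e} ∧ ThreeConn M' ∧ F₀ = F') ∨
     (5 ≤ F.length ∧ ∃ (l₁ : List α) (x y : α) (l₂ : List α),
        F = l₁ ++ x :: y :: l₂ ∧ fanBool b l₁.length = false ∧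
        M' = mdel (mcon M {x}) {y} ∧ ThreeConn M' ∧ F₀ = l₁ ++ l₂))

/-- The fan-extensions of `N` relative to the family `FN` of fans of `N`: the smallest
collection of matroids containing `N` and closed under fan-lengthening moves performed
on fans belonging to covering families. -/
inductive FanExt (N : Matroid α) (FN : Finset (List α)) : Matroid α → Prop
  | base : FanExt N FN N
  | step (M' M : Matroid α) (𝓕 : Finset (List α)) (F₀ F : List α) :
      FanExt N FN M' → CoveringFamily N FN M' 𝓕 → F₀ ∈ 𝓕 →
      FanLengthen M' M F₀ F → FanExt N FN M

/-- The covering family `𝓕` of `M` admits a fan-shortening move: there are a matroid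
`M'` having `N` as a minor and a fan `F₀` of `M'` such that `M` is obtained from `M'`
by a fan-lengthening move on `F₀` producing a fan that belongs to `𝓕`. -/
def AdmitsFanShortening (N M : Matroid α) (𝓕 : Finset (List α)) : Prop :=
  ∃ (M' : Matroid α) (F₀ F : List α), IsMinor N M' ∧ F ∈ 𝓕 ∧ FanLengthen M' M F₀ F

/-- The alternation pattern of a fan presented as a function with one-based indices:
position `i` carries a spoke element iff `posBool b i = true`, where `b` records
whether the first triple of the fan is a triangle. -/
def posBool (b : Bool) (i : ℕ) : Bool := if i % 2 = 1 then b else !b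

/-- `(e 1, ..., e n)` is a fan of `M` whose first triple is a triangle if `b = true`
(so that `e 1` is a spoke element) and a triad if `b = false`: at least three distinct
elements of the ground set in which every three consecutive elements form alternately
triangles and triads. -/
def IsFanFun (M : Matroid α) (b : Bool) (n : ℕ) (e : ℕ → α) : Prop :=
  3 ≤ n ∧ (∀ i j, 1 ≤ i → i ≤ n → 1 ≤ j → j ≤ n → e i = e j → i = j) ∧
  (∀ i, 1 ≤ i → i ≤ n → e i ∈ M.E) ∧
  ∀ i, 1 ≤ i → i + 2 ≤ n → TriOrTriad M (posBool b i) {e i, e (i+1), e (i+2)}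

/-- The set of elements of the fan `(e 1, ..., e n)`. -/
def fanSet (n : ℕ) (e : ℕ → α) : Set α := {a | ∃ i, 1 ≤ i ∧ i ≤ n ∧ a = e i}

/-- The set of rim elements of the fan `(e 1, ..., e n)` with alternation pattern `b`. -/
def rimSet (b : Bool) (n : ℕ) (e : ℕ → α) : Set α :=
  {a | ∃ i, 1 ≤ i ∧ i ≤ n ∧ posBool b i = false ∧ a = e i}

/-- `M` is representable over the field `𝔽`. -/
def RepOver (M : Matroid α) (𝔽 : Type*) [Field 𝔽] : Prop :=
  ∃ f : α → (α → 𝔽),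
    ∀ I : Set α, I ⊆ M.E → (M.Indep I ↔ LinearIndependent 𝔽 (fun x : I => f (x : α)))

/-- `M` has a minor isomorphic to a member of `𝓢`. -/
def HasSMinor (𝓢 : Set (Matroid α)) (M : Matroid α) : Prop :=
  ∃ S ∈ 𝓢, ∃ N, IsMinor N M ∧ IsoTo N S

/-- `M` is `𝓢`-fragile: for every element `e` of `M`, at least one of `M \ e` and
`M / e` has no `𝓢`-minor. -/
def SFragile (𝓢 : Set (Matroid α)) (M : Matroid α) : Prop :=
  ∀ e ∈ M.E, ¬ HasSMinor 𝓢 (mdel M {e}) ∨ ¬ HasSMinor 𝓢 (mcon M {e})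

end PaperDefs

open PaperDefs

namespace PaperDefs

variable {M : Matroid α} {C K X Y T : Set α} {f : α} {k : ℕ∞} {b : Bool}

lemma erk_eq_eRk (M : Matroid α) (X : Set α) : erk M X = M.eRk X := by
  apply le_antisymm
  · exact iSup₂_le fun I hI ↦ hI.1.encard_le_eRk_of_subset hI.2
  · obtain ⟨I, hI⟩ := M.exists_isBasis' X
    rw [hI.eRk_eq_encard]
    exact le_iSup₂_of_le I ⟨hI.indep, hI.subset⟩ le_rfl

lemma isCircuit_iff : IsCircuit M C ↔ M.IsCircuit C :=
  isCircuit_iff_forall_ssubset.symm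

lemma TriOrTriad.isCircuit_or_isCocircuit (hT : TriOrTriad M b T) :
    M.IsCircuit T ∨ M.IsCocircuit T := by
  cases b with
  | true => exact .inl (isCircuit_iff.1 hT.1)
  | false => exact .inr (isCircuit_iff.1 hT.1)

lemma notMem_closure_of_isCocircuit (hK : M.IsCocircuit K) (hf : f ∈ K) (hKY : Disjoint K Y) :
    f ∉ M.closure Y := by
  intro hcl
  obtain ⟨C, hCY, hC, hfC⟩ := exists_isCircuit_of_mem_closure hcl (hKY.notMem_of_mem_left hf)
  refine hC.inter_isCocircuit_ne_singleton hK (e := f) ?_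
  refine Subset.antisymm ?_ (singleton_subset_iff.2 ⟨hfC, hf⟩)
  calc C ∩ K ⊆ insert f Y ∩ K := inter_subset_inter_left K hCY
    _ = {f} := by rw [insert_inter_of_mem hf, hKY.symm.inter_eq, insert_empty_eq]

/-- `λ_M(X) ≤ k`, for the connectivity function `λ_M(X) = r(X) + r(E - X) - r(M)`; thus `X` is
3-separating when `k = 2`. The rank of `M` stands on the right because subtraction truncates. -/
def ConnectivityLE (M : Matroid α) (X : Set α) (k : ℕ∞) : Prop :=
  M.eRk X + M.eRk (M.E \ X) ≤ M.eRank + k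

lemma connectivityLE_of_encard_le (hX : X.encard ≤ k) : ConnectivityLE M X k := by
  unfold ConnectivityLE
  rw [add_comm]
  gcongr
  · exact M.eRk_le_eRank _
  · exact (M.eRk_le_encard X).trans hX

namespace ConnectivityLE

lemma insert_of_mem_closure (hX : ConnectivityLE M X k) (hf : f ∈ M.closure X) :
    ConnectivityLE M (insert f X) k := by
  have hrank : M.eRk (insert f X) = M.eRk X := by
    rw [← eRk_closure_eq, closure_insert_eq_of_mem_closure hf, eRk_closure_eq]
  calc M.eRk (insert f X) + M.eRk (M.E \ insert f X)
      ≤ M.eRk X + M.eRk (M.E \ X) := by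
        rw [hrank]
        gcongr
        exact M.eRk_mono (sdiff_subset_sdiff_right (subset_insert f X))
    _ ≤ M.eRank + k := hX

lemma insert_of_notMem_closure (hX : ConnectivityLE M X k) (hfE : f ∈ M.E)
    (hf : f ∉ M.closure (M.E \ insert f X)) : ConnectivityLE M (insert f X) k := by
  by_cases hfX : f ∈ X
  · rwa [insert_eq_of_mem hfX]
  have hrank : M.eRk (M.E \ X) = M.eRk (M.E \ insert f X) + 1 := by
    rw [← eRk_insert_eq_add_one ⟨hfE, hf⟩, insert_sdiff_insert,
      insert_eq_of_mem (mem_sdiff_of_mem hfE hfX)]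
  calc M.eRk (insert f X) + M.eRk (M.E \ insert f X)
      ≤ M.eRk X + 1 + M.eRk (M.E \ insert f X) := by
        gcongr
        exact M.eRk_insert_le_add_one f X
    _ = M.eRk X + M.eRk (M.E \ X) := by rw [hrank, add_right_comm, add_assoc]
    _ ≤ M.eRank + k := hX

lemma insert_of_isCircuit (hX : ConnectivityLE M X k) (hC : M.IsCircuit C) (hf : f ∈ C)
    (hCX : C ⊆ insert f X) : ConnectivityLE M (insert f X) k :=
  hX.insert_of_mem_closure <| M.closure_subset_closure (sdiff_singleton_subset_iff.2 hCX)
    (hC.mem_closure_sdiff_singleton_of_mem hf)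

lemma insert_of_isCocircuit (hX : ConnectivityLE M X k) (hK : M.IsCocircuit K) (hf : f ∈ K)
    (hKX : K ⊆ insert f X) : ConnectivityLE M (insert f X) k :=
  hX.insert_of_notMem_closure (hK.subset_ground hf) <|
    notMem_closure_of_isCocircuit hK hf (disjoint_sdiff_right.mono_left hKX)

end ConnectivityLE

lemma fanSet_eq_image (n : ℕ) (e : ℕ → α) : fanSet n e = e '' Icc 1 n := by
  ext x
  simp only [fanSet, mem_ofPred_eq, mem_image, mem_Icc, and_assoc, eq_comm]

lemma fanSet_succ (n : ℕ) (e : ℕ → α) :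
    fanSet (n + 1) e = insert (e (n + 1)) (fanSet n e) := by
  rw [fanSet_eq_image, fanSet_eq_image, ← image_insert_eq]
  exact congrArg (e '' ·) (insert_Icc_right_eq_Icc_succ n.succ_pos).symm

lemma encard_fanSet_le (n : ℕ) (e : ℕ → α) : (fanSet n e).encard ≤ n := by
  calc (fanSet n e).encard ≤ (Icc 1 n).encard := fanSet_eq_image n e ▸ encard_image_le e _
    _ = n := by simp [← Finset.coe_Icc, encard_coe_eq_coe_finsetCard]

lemma connectivityLE_fanSet {n : ℕ} {e : ℕ → α}
    (h : ∀ i, 1 ≤ i → i + 2 ≤ n →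
      M.IsCircuit {e i, e (i + 1), e (i + 2)} ∨ M.IsCocircuit {e i, e (i + 1), e (i + 2)}) :
    ConnectivityLE M (fanSet n e) 2 := by
  induction n with
  | zero => exact connectivityLE_of_encard_le ((encard_fanSet_le 0 e).trans (by simp))
  | succ n ih =>
    obtain hn | hn := Nat.lt_or_ge n 2
    · exact connectivityLE_of_encard_le ((encard_fanSet_le _ e).trans (mod_cast hn))
    obtain ⟨i, rfl⟩ := Nat.exists_eq_add_of_le' hn
    have hX : ConnectivityLE M (fanSet (i + 2) e) 2 := ih fun j hj hji ↦ h j hj (by lia)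
    have htriple : {e (i + 1), e (i + 2), e (i + 3)} ⊆ insert (e (i + 3)) (fanSet (i + 2) e) := by
      simp only [fanSet_succ]
      grind
    rw [fanSet_succ]
    obtain hC | hK := h (i + 1) (by lia) (by lia)
    · exact hX.insert_of_isCircuit hC (by simp) htriple
    · exact hX.insert_of_isCocircuit hK (by simp) htriple

end PaperDefs

theorem statement8_general (M : Matroid α) (n : ℕ) (e : ℕ → α)
    (h : ∀ i, 1 ≤ i → i + 2 ≤ n →
      M.IsCircuit {e i, e (i + 1), e (i + 2)} ∨ M.IsCocircuit {e i, e (i + 1), e (i + 2)}) :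
    erk M (fanSet n e) + erk M (M.E \ fanSet n e) ≤ erk M M.E + 2 := by
  simpa only [ConnectivityLE, erk_eq_eRk, eRk_ground] using connectivityLE_fanSet h

/-- The set of elements of a fan of `M` is 3-separating in `M`. -/
theorem statement8 (M : Matroid α) (b : Bool) (n : ℕ) (e : ℕ → α)
    (hfan : IsFanFun M b n e) :
    erk M (fanSet n e) + erk M (M.E \ fanSet n e) ≤ erk M M.E + 2 :=
  statement8_general M n e fun i hi hin ↦ (hfan.2.2.2 i hi hin).isCircuit_or_isCocircuit
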